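/- Let d ≥ 1 and let φ : ℕ → (0,∞) be a positive increasing function with ∑_{n=1}^∞ 1/φ(n) < ∞. Then for Lebesgue-almost every α = (α₁,…,α_d) ∈ ℝ^d there is a constant C(α,φ) such that for all N ≥ 3, Δ(α;N) ≤ C(α,φ)·(log N)^d · φ(log log N)^{max{3,d}}. -/

import Mathlib

open MeasureTheory Finset

noncomputable section

/-- Ergodic discrepancy of the d-linear form sequence
`D(α,x;N) = ∑_{1≤k₁,…,k_d≤N} χ_{[0,x)}({k₁α₁+⋯+k_dα_d}) − N^d·x`. -/
def DiscLF (d N : ℕ) (α : Fin d → ℝ) (x : ℝ) : ℝ :=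
  (∑ k ∈ (Fintype.piFinset fun _ : Fin d => Finset.Icc 1 N),
      if Int.fract (∑ i : Fin d, (k i : ℝ) * α i) < x then (1 : ℝ) else 0)
    - (N : ℝ) ^ d * x

/-!
Write the indicator of `[1, N]` as a signed sum of `O(log N)` nonnegative bumps at dyadic scales
`L`, each with Fourier transform `O(L / (1 + (L ‖e(θ) - 1‖)²)²)`. For a product of such bumps at
the scales `L₁, …, L_d`, the Erdős–Turán inequality with cutoff `A = L₁ ⋯ L_d` bounds the
discrepancy by a constant times `1 + ∑ₙ cₙ Pₙ² / A`, where `cₙ = min (1 / n) (A / n²)` and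
`Pₙ(α) = ∏ᵢ Lᵢ / (1 + (Lᵢ ‖e(n αᵢ) - 1‖)²)` has maximum `A` but mean at most `π ^ d` over any unit
cube. For `n > A / R` use `Pₙ² / A ≤ Pₙ` and the first moment: these `cₙ` add up to `O(1 + log R)`.
For `n ≤ A / R` the sum is at most the square of `∑ₙ √(cₙ / A) Pₙ`, whose mean is `O(R ^ (-1 / 2))`.

For `log N ≤ e ^ s` there are `O(e ^ (s d))` products of bumps. Dividing the first kind of sum by
`e ^ (s d) ψ(s)` and taking for `R` a large power of `e ^ s`, the means over a cube are
`O((s + 1) / ψ(s) + e ^ (-s))`. They are summable over `s`, so that for almost every `α` the sums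
are bounded in `s`.
-/

section ErdosTuran

open Real FourierTransform

theorem fract_sub_eq_add_ite {R : Type*} [CommRing R] [LinearOrder R] [IsStrictOrderedRing R]
    [FloorRing R] {x : R} (h0 : 0 ≤ x) (h1 : x ≤ 1) (y : R) :
    Int.fract (y - x) = Int.fract y - x + if Int.fract y < x then 1 else 0 := by
  have hy0 := Int.fract_nonneg y
  have hy1 := Int.fract_lt_one y
  rw [Int.fract_eq_iff]
  refine ⟨by split_ifs <;> linarith, by split_ifs <;> linarith,
    ⌊y⌋ - if Int.fract y < x then 1 else 0, ?_⟩
  have := Int.floor_add_fract y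
  push_cast
  split_ifs <;> linear_combination -this

theorem hasSum_bernoulliFun_two_fract (y : ℝ) :
    HasSum (fun n : ℕ => 1 / (π ^ 2 * (n : ℝ) ^ 2) * (𝐞 (n * y) : ℂ).re)
      (bernoulliFun 2 (Int.fract y)) := by
  have h := (hasSum_one_div_nat_pow_mul_cos (k := 1) one_ne_zero
    (x := Int.fract y) ⟨Int.fract_nonneg y, (Int.fract_lt_one y).le⟩).mul_left (1 / π ^ 2)
  convert! h using 1
  · funext n
    have hcos : (𝐞 (n * y) : ℂ).re = cos (2 * π * n * Int.fract y) := by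
      rw [fourierChar_apply, Complex.exp_ofReal_mul_I_re, ← Int.self_sub_floor,
        ← cos_sub_int_mul_two_pi _ (n * ⌊y⌋)]
      congr 1
      push_cast
      ring
    rw [hcos]
    field_simp
  · simp only [bernoulliFun, mul_one, Nat.factorial]
    field_simp
    norm_num

/-- The mean of the sawtooth `{t} - 1 / 2` over `t ∈ [y - A⁻¹, y]`, written through its
primitive, the periodic second Bernoulli function. -/
def smoothSawtooth (A y : ℝ) : ℝ :=
  A / 2 * (bernoulliFun 2 (Int.fract y) - bernoulliFun 2 (Int.fract (y - A⁻¹)))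

-- The sawtooth has slope `1` and only jumps down, so at the ends of a window of length `A⁻¹` it
-- is almost above, respectively almost below, its mean over the window.
theorem smoothSawtooth_mem_Icc {A : ℝ} (hA : 1 ≤ A) (y : ℝ) :
    smoothSawtooth A y ∈ Set.Icc (Int.fract y - 1 / 2 - A⁻¹ / 2)
      (Int.fract (y - A⁻¹) - 1 / 2 + A⁻¹ / 2) := by
  have hη0 : 0 < A⁻¹ := by positivity
  have hη1 : A⁻¹ ≤ 1 := inv_le_one_of_one_le₀ hA
  have hy0 := Int.fract_nonneg y
  have hmean : smoothSawtooth A y =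
      (bernoulliFun 2 (Int.fract y) - bernoulliFun 2 (Int.fract (y - A⁻¹))) / (2 * A⁻¹) := by
    rw [smoothSawtooth]; field_simp
  rw [hmean, bernoulliFun_two, bernoulliFun_two, fract_sub_eq_add_ite hη0.le hη1, Set.mem_Icc,
    le_div_iff₀ (by positivity), div_le_iff₀ (by positivity)]
  constructor <;> split_ifs <;> nlinarith

theorem hasSum_smoothSawtooth (A y : ℝ) :
    HasSum (fun n : ℕ => A / (2 * π ^ 2 * (n : ℝ) ^ 2) *
      ((1 - 𝐞 (-(n * A⁻¹))) * 𝐞 (n * y) : ℂ).re) (smoothSawtooth A y) := by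
  have h := ((hasSum_bernoulliFun_two_fract y).sub
    (hasSum_bernoulliFun_two_fract (y - A⁻¹))).mul_left (A / 2)
  convert! h using 1
  funext n
  have hshift : (𝐞 (n * (y - A⁻¹)) : ℂ) = 𝐞 (-(n * A⁻¹)) * 𝐞 (n * y) := by
    rw [← Circle.coe_mul, ← AddChar.map_add_eq_mul]
    congr 2
    ring
  rw [hshift, ← mul_sub, ← Complex.sub_re, sub_mul, one_mul]
  ring

/-- An upper bound for the modulus of the `n`-th Fourier coefficient of `smoothSawtooth A`. It
vanishes at `n = 0` because of `x / 0 = 0`. -/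
def sawCoeff (A : ℝ) (n : ℕ) : ℝ := min (1 / (n : ℝ)) (A / (n : ℝ) ^ 2)

theorem sawCoeff_nonneg {A : ℝ} (hA : 0 ≤ A) (n : ℕ) : 0 ≤ sawCoeff A n :=
  le_min (by positivity) (by positivity)

theorem summable_sawCoeff {A : ℝ} (hA : 0 ≤ A) : Summable (sawCoeff A) := by
  refine Summable.of_nonneg_of_le (sawCoeff_nonneg hA) (fun n => min_le_right _ _) ?_
  simp_rw [div_eq_mul_inv]
  exact (summable_nat_pow_inv.2 one_lt_two).mul_left A

theorem norm_one_sub_fourierChar_le (θ : ℝ) : ‖(1 - 𝐞 θ : ℂ)‖ ≤ 2 * π * |θ| := by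
  rw [norm_sub_rev, fourierChar_apply, mul_comm _ Complex.I]
  refine norm_exp_I_mul_ofReal_sub_one_le.trans_eq ?_
  rw [norm_eq_abs, abs_mul, abs_of_pos two_pi_pos]

theorem mul_norm_one_sub_fourierChar_le_sawCoeff {A : ℝ} (hA : 0 < A) (n : ℕ) :
    A / (2 * π ^ 2 * (n : ℝ) ^ 2) * ‖(1 - 𝐞 (-(n * A⁻¹)) : ℂ)‖ ≤ sawCoeff A n := by
  rcases n.eq_zero_or_pos with rfl | hn
  · simp [sawCoeff]
  have hn' : (0 : ℝ) < n := by exact_mod_cast hn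
  have hpi := pi_gt_three
  refine le_min ?_ ?_
  · calc A / (2 * π ^ 2 * (n : ℝ) ^ 2) * ‖(1 - 𝐞 (-(n * A⁻¹)) : ℂ)‖
        ≤ A / (2 * π ^ 2 * (n : ℝ) ^ 2) * (2 * π * (n * A⁻¹)) := by
          gcongr
          refine (norm_one_sub_fourierChar_le _).trans_eq ?_
          rw [abs_neg, abs_of_pos (by positivity)]
      _ = 1 / (π * n) := by field_simp
      _ ≤ 1 / n := by gcongr; nlinarith
  · calc A / (2 * π ^ 2 * (n : ℝ) ^ 2) * ‖(1 - 𝐞 (-(n * A⁻¹)) : ℂ)‖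
        ≤ A / (2 * π ^ 2 * (n : ℝ) ^ 2) * (1 + 1) := by
          gcongr
          refine (norm_sub_le _ _).trans_eq ?_
          rw [norm_one, Circle.norm_coe]
      _ = A / (π ^ 2 * n ^ 2) := by field_simp; norm_num
      _ ≤ A / n ^ 2 := by gcongr; exact le_mul_of_one_le_left (by positivity) (by nlinarith)

variable {κ : Type*} (s : Finset κ) (w y : κ → ℝ)

/-- The exponential sum of frequency `n` over the points `y k` with weights `w k`. -/
def expSum (n : ℕ) : ℂ := ∑ k ∈ s, (w k : ℂ) * 𝐞 (n * y k)

theorem norm_expSum_add_const (c : ℝ) (n : ℕ) :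
    ‖expSum s w (fun k => y k + c) n‖ = ‖expSum s w y n‖ := by
  have hfactor : expSum s w (fun k => y k + c) n = 𝐞 (n * c) * expSum s w y n := by
    rw [expSum, expSum, mul_sum]
    refine sum_congr rfl fun k _ => ?_
    rw [mul_add, AddChar.map_add_eq_mul, Circle.coe_mul]
    ring
  rw [hfactor, norm_mul, Circle.norm_coe, one_mul]

variable {s w}

theorem norm_expSum_le (hw : ∀ k ∈ s, 0 ≤ w k) (n : ℕ) : ‖expSum s w y n‖ ≤ ∑ k ∈ s, w k := by
  refine (norm_sum_le _ _).trans (sum_le_sum fun k hk => ?_)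
  rw [norm_mul, Circle.norm_coe, mul_one, Complex.norm_real, norm_of_nonneg (hw k hk)]

theorem summable_sawCoeff_mul_norm_expSum (hw : ∀ k ∈ s, 0 ≤ w k) {A : ℝ} (hA : 0 ≤ A) :
    Summable fun n => sawCoeff A n * ‖expSum s w y n‖ := by
  refine Summable.of_nonneg_of_le (fun n => mul_nonneg (sawCoeff_nonneg hA n) (norm_nonneg _))
    (fun n => ?_) ((summable_sawCoeff hA).mul_right (∑ k ∈ s, w k))
  exact mul_le_mul_of_nonneg_left (norm_expSum_le y hw n) (sawCoeff_nonneg hA n)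

theorem abs_sum_smoothSawtooth_le (hw : ∀ k ∈ s, 0 ≤ w k) {A : ℝ} (hA : 0 < A) :
    |∑ k ∈ s, w k * smoothSawtooth A (y k)| ≤ ∑' n, sawCoeff A n * ‖expSum s w y n‖ := by
  have hseries : HasSum (fun n : ℕ => A / (2 * π ^ 2 * (n : ℝ) ^ 2) *
      ((1 - 𝐞 (-(n * A⁻¹))) * expSum s w y n).re) (∑ k ∈ s, w k * smoothSawtooth A (y k)) := by
    convert! hasSum_sum (s := s) fun k _ => (hasSum_smoothSawtooth A (y k)).mul_left (w k) using 1
    funext n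
    rw [expSum, mul_sum, Complex.re_sum, mul_sum]
    refine sum_congr rfl fun k _ => ?_
    rw [mul_left_comm, Complex.re_ofReal_mul, mul_left_comm]
  rw [← hseries.tsum_eq, ← norm_eq_abs]
  refine tsum_of_norm_bounded (summable_sawCoeff_mul_norm_expSum y hw hA.le).hasSum fun n => ?_
  calc ‖A / (2 * π ^ 2 * (n : ℝ) ^ 2) * ((1 - 𝐞 (-(n * A⁻¹))) * expSum s w y n).re‖
      ≤ A / (2 * π ^ 2 * (n : ℝ) ^ 2) * ‖(1 - 𝐞 (-(n * A⁻¹))) * expSum s w y n‖ := by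
        rw [norm_mul, norm_of_nonneg (by positivity), norm_eq_abs]
        gcongr
        exact Complex.abs_re_le_norm _
    _ ≤ sawCoeff A n * ‖expSum s w y n‖ := by
        rw [norm_mul, ← mul_assoc]
        gcongr
        exact mul_norm_one_sub_fourierChar_le_sawCoeff hA n

theorem abs_sum_fract_sub_half_le (hw : ∀ k ∈ s, 0 ≤ w k) {A : ℝ} (hA : 1 ≤ A) :
    |∑ k ∈ s, w k * (Int.fract (y k) - 1 / 2)| ≤
      (∑ k ∈ s, w k) / A + ∑' n, sawCoeff A n * ‖expSum s w y n‖ := by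
  have hA0 : 0 < A := by positivity
  have hmass : 0 ≤ (∑ k ∈ s, w k) / A := div_nonneg (sum_nonneg hw) hA0.le
  have hupper : ∑ k ∈ s, w k * (Int.fract (y k) - 1 / 2) ≤
      ∑ k ∈ s, w k * smoothSawtooth A (y k) + (∑ k ∈ s, w k) / A / 2 := by
    rw [div_right_comm, sum_div, sum_div, ← sum_add_distrib]
    refine sum_le_sum fun k hk => ?_
    have := mul_le_mul_of_nonneg_left (smoothSawtooth_mem_Icc hA (y k)).1 (hw k hk)
    linear_combination this
  have hlower : ∑ k ∈ s, w k * smoothSawtooth A (y k + A⁻¹) - (∑ k ∈ s, w k) / A / 2 ≤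
      ∑ k ∈ s, w k * (Int.fract (y k) - 1 / 2) := by
    rw [div_right_comm, sum_div, sum_div, ← sum_sub_distrib]
    refine sum_le_sum fun k hk => ?_
    have := mul_le_mul_of_nonneg_left (smoothSawtooth_mem_Icc hA (y k + A⁻¹)).2 (hw k hk)
    rw [add_sub_cancel_right] at this
    linear_combination this
  have hbound := abs_le.1 (abs_sum_smoothSawtooth_le y hw hA0)
  have hshifted := abs_le.1 (abs_sum_smoothSawtooth_le (fun k => y k + A⁻¹) hw hA0)
  simp_rw [norm_expSum_add_const] at hshifted
  exact abs_le.2 ⟨by linarith [hshifted.1], by linarith [hbound.2]⟩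

theorem abs_sum_mul_indicator_sub_le (hw : ∀ k ∈ s, 0 ≤ w k) {A x : ℝ} (hA : 1 ≤ A)
    (hx : x ∈ Set.Icc 0 1) :
    |∑ k ∈ s, w k * ((if Int.fract (y k) < x then 1 else 0) - x)| ≤
      2 * ((∑ k ∈ s, w k) / A + ∑' n, sawCoeff A n * ‖expSum s w y n‖) := by
  have hsawtooth : ∑ k ∈ s, w k * ((if Int.fract (y k) < x then 1 else 0) - x) =
      ∑ k ∈ s, w k * (Int.fract (y k + -x) - 1 / 2) -
        ∑ k ∈ s, w k * (Int.fract (y k) - 1 / 2) := by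
    rw [← sum_sub_distrib]
    refine sum_congr rfl fun k _ => ?_
    rw [← sub_eq_add_neg, fract_sub_eq_add_ite hx.1 hx.2]
    ring
  have hshifted := abs_sum_fract_sub_half_le (fun k => y k + -x) hw hA
  simp_rw [norm_expSum_add_const] at hshifted
  rw [hsawtooth]
  linarith [abs_sub (∑ k ∈ s, w k * (Int.fract (y k + -x) - 1 / 2))
    (∑ k ∈ s, w k * (Int.fract (y k) - 1 / 2)), abs_sum_fract_sub_half_le y hw hA]

end ErdosTuran

section DyadicPieces

open Real FourierTransform Polynomial

/-- The polynomials with nonnegative coefficients, as a subsemiring. -/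
def nonnegCoeff (R : Type*) [CommSemiring R] [PartialOrder R] [IsOrderedRing R] :
    Subsemiring R[X] where
  carrier := {p | ∀ k, 0 ≤ p.coeff k}
  zero_mem' _ := by simp
  one_mem' k := by rw [coeff_one]; split_ifs <;> simp
  add_mem' hp hq k := by rw [coeff_add]; exact add_nonneg (hp k) (hq k)
  mul_mem' hp hq k := by rw [coeff_mul]; exact sum_nonneg fun _ _ => mul_nonneg (hp _) (hq _)

theorem C_mem_nonnegCoeff {R : Type*} [CommSemiring R] [PartialOrder R] [IsOrderedRing R] {c : R}
    (hc : 0 ≤ c) : C c ∈ nonnegCoeff R := fun k => by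
  rw [coeff_C]; split_ifs <;> simp [hc]

theorem X_mem_nonnegCoeff {R : Type*} [CommSemiring R] [PartialOrder R] [IsOrderedRing R] :
    X ∈ nonnegCoeff R := fun k => by
  rw [coeff_X]; split_ifs <;> simp

/-- The polynomial `(1 + X + ⋯ + X ^ (m - 1)) / m`, the uniform distribution on `[0, m)`. -/
def avgPoly (m : ℕ) : ℝ[X] := C (m : ℝ)⁻¹ * ∑ t ∈ range m, X ^ t

theorem C_mul_avgPoly (m : ℕ) : C (m : ℝ) * avgPoly m = ∑ t ∈ range m, X ^ t := by
  rcases eq_or_ne m 0 with rfl | hm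
  · simp
  · rw [avgPoly, ← mul_assoc, ← C_mul, mul_inv_cancel₀ (Nat.cast_ne_zero.2 hm), C_1, one_mul]

theorem avgPoly_one : avgPoly 1 = 1 := by simp [avgPoly]

theorem C_mul_avgPoly_mul_one_sub_X (m : ℕ) :
    C (m : ℝ) * avgPoly m * (1 - X) = 1 - X ^ m := by
  rw [C_mul_avgPoly, geom_sum_mul_neg]

theorem C_mul_avgPoly_mul_one_sub_X_pow (m n : ℕ) :
    C (n : ℝ) * avgPoly n * (1 - X ^ m) = C (m : ℝ) * avgPoly m * (1 - X ^ n) := by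
  rw [← C_mul_avgPoly_mul_one_sub_X m, ← C_mul_avgPoly_mul_one_sub_X n]
  ring

theorem avgPoly_two_mul (m : ℕ) : avgPoly (2 * m) = C (1 / 2) * avgPoly m * (1 + X ^ m) := by
  simp only [avgPoly, two_mul m, sum_range_add, pow_add, ← mul_sum]
  rw [← two_mul (m : ℕ), Nat.cast_mul, mul_inv, C_mul]
  norm_num
  ring

theorem avgPoly_sub_avgPoly_two_mul (m : ℕ) :
    avgPoly m - avgPoly (2 * m) = C (1 / 2) * avgPoly m * (1 - X ^ m) := by
  have htwo : C (1 / 2) + C (1 / 2) = (1 : ℝ[X]) := by rw [← C_add]; norm_num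
  rw [avgPoly_two_mul]
  linear_combination (-avgPoly m) * htwo

/-- The difference of the cubes of `avgPoly m` and `avgPoly (2 * m)`, divided by `1 - X` in place of
its factor `1 - X ^ m`: a smooth bump of length `m` and bounded height. -/
def bumpPoly (m : ℕ) : ℝ[X] :=
  C (m / 2 : ℝ) * avgPoly m ^ 2 *
    (avgPoly m ^ 2 + avgPoly m * avgPoly (2 * m) + avgPoly (2 * m) ^ 2)

theorem C_mul_avgPoly_mul_cube_sub_cube (n m : ℕ) :
    C (n : ℝ) * avgPoly n * (avgPoly m ^ 3 - avgPoly (2 * m) ^ 3) = bumpPoly m * (1 - X ^ n) := by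
  have hhalf : C (m / 2 : ℝ) = C (m : ℝ) * C (1 / 2) := by rw [← C_mul, mul_one_div]
  rw [bumpPoly, hhalf]
  linear_combination
    (avgPoly m ^ 2 + avgPoly m * avgPoly (2 * m) + avgPoly (2 * m) ^ 2) *
      (C (n : ℝ) * avgPoly n * avgPoly_sub_avgPoly_two_mul m +
        C (1 / 2) * avgPoly m * C_mul_avgPoly_mul_one_sub_X_pow m n)

theorem C_mul_avgPoly_eq_add_sum_bumpPoly (n J : ℕ) :
    C (n : ℝ) * avgPoly n = C (n : ℝ) * avgPoly n * avgPoly (2 ^ J) ^ 3 +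
      ∑ j ∈ range J, bumpPoly (2 ^ j) * (1 - X ^ n) := by
  simp_rw [← C_mul_avgPoly_mul_cube_sub_cube, ← mul_sum, ← pow_succ']
  rw [sum_range_sub' fun j => avgPoly (2 ^ j) ^ 3, pow_zero, avgPoly_one]
  ring

/-- The generating polynomials of the weights into which the indicator of `[1, N]` is decomposed.
For `j < J` the index `(j, b)` stands for a bump at scale `2 ^ j` at the left (`b = false`) or
right (`b = true`) end of the interval, and `(J, false)` for the smooth remainder. -/
def pieceWeight (N J : ℕ) (a : ℕ × Bool) : ℝ[X] :=
  if a.1 < J then bumpPoly (2 ^ a.1) * X ^ (1 + a.2.toNat * N)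
  else if a.2 then 0 else X * (C (N : ℝ) * avgPoly N * avgPoly (2 ^ J) ^ 3)

theorem X_mul_sum_X_pow_eq_sum_pieceWeight (N J : ℕ) :
    (X * ∑ t ∈ range N, X ^ t : ℝ[X]) = ∑ a ∈ range (J + 1) ×ˢ (univ : Finset Bool),
      C ((-1) ^ a.2.toNat) * pieceWeight N J a := by
  have hbump : ∀ j ∈ range J, ∑ b : Bool, C ((-1) ^ b.toNat) * pieceWeight N J (j, b) =
      X * (bumpPoly (2 ^ j) * (1 - X ^ N)) := fun j hj => by
    simp only [Fintype.sum_bool, pieceWeight, mem_range.1 hj, if_true, Bool.toNat_true,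
      Bool.toNat_false, pow_one, pow_zero, C_neg, C_1]
    ring
  have hrest : ∑ b : Bool, C ((-1) ^ b.toNat) * pieceWeight N J (J, b) =
      X * (C (N : ℝ) * avgPoly N * avgPoly (2 ^ J) ^ 3) := by
    simp [pieceWeight]
  rw [sum_product, sum_range_succ, sum_congr rfl hbump, hrest, ← mul_sum, ← C_mul_avgPoly]
  linear_combination X * C_mul_avgPoly_eq_add_sum_bumpPoly N J

theorem coeff_X_mul_sum_X_pow (N k : ℕ) :
    (X * ∑ t ∈ range N, X ^ t : ℝ[X]).coeff k = if k ∈ Icc 1 N then 1 else 0 := by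
  cases k with
  | zero => simp
  | succ k =>
    simp only [coeff_X_mul, finsetSum_coeff, coeff_X_pow, sum_ite_eq, mem_range, mem_Icc]
    exact if_congr (by lia) rfl rfl

theorem ite_mem_Icc_eq_sum_coeff_pieceWeight (N J k : ℕ) :
    (if k ∈ Icc 1 N then (1 : ℝ) else 0) = ∑ a ∈ range (J + 1) ×ˢ (univ : Finset Bool),
      (-1) ^ a.2.toNat * (pieceWeight N J a).coeff k := by
  rw [← coeff_X_mul_sum_X_pow, X_mul_sum_X_pow_eq_sum_pieceWeight N J, finsetSum_coeff]
  simp_rw [coeff_C_mul]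

theorem avgPoly_mem_nonnegCoeff (m : ℕ) : avgPoly m ∈ nonnegCoeff ℝ :=
  mul_mem (C_mem_nonnegCoeff (by positivity))
    (sum_mem fun t _ => pow_mem X_mem_nonnegCoeff t)

theorem bumpPoly_mem_nonnegCoeff (m : ℕ) : bumpPoly m ∈ nonnegCoeff ℝ := by
  have h := avgPoly_mem_nonnegCoeff
  exact mul_mem (mul_mem (C_mem_nonnegCoeff (by positivity)) (pow_mem (h _) 2))
    (add_mem (add_mem (pow_mem (h _) 2) (mul_mem (h _) (h _))) (pow_mem (h _) 2))

theorem pieceWeight_mem_nonnegCoeff (N J : ℕ) (a : ℕ × Bool) :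
    pieceWeight N J a ∈ nonnegCoeff ℝ := by
  have h := avgPoly_mem_nonnegCoeff
  unfold pieceWeight
  split_ifs
  · exact mul_mem (bumpPoly_mem_nonnegCoeff _) (pow_mem X_mem_nonnegCoeff _)
  · exact zero_mem _
  · exact mul_mem X_mem_nonnegCoeff
      (mul_mem (mul_mem (C_mem_nonnegCoeff (by positivity)) (h N)) (pow_mem (h _) 3))

/-- The kernel `L / (1 + (L ‖e(θ) - 1‖) ^ 2)`, which localises `θ` to within `1 / L` of the
integers. -/
def locKernel (L θ : ℝ) : ℝ := L / (1 + (L * ‖(𝐞 θ : ℂ) - 1‖) ^ 2)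

theorem locKernel_nonneg {L : ℝ} (hL : 0 ≤ L) (θ : ℝ) : 0 ≤ locKernel L θ := by
  unfold locKernel; positivity

theorem locKernel_le {L : ℝ} (hL : 0 ≤ L) (θ : ℝ) : locKernel L θ ≤ L :=
  div_le_self hL (le_add_of_nonneg_right (sq_nonneg _))

theorem locKernel_zero (L : ℝ) : locKernel L 0 = L := by simp [locKernel]

theorem locKernel_sq_div (L θ : ℝ) :
    locKernel L θ ^ 2 / L = L * (1 / (1 + (L * ‖(𝐞 θ : ℂ) - 1‖) ^ 2)) ^ 2 := by
  rcases eq_or_ne L 0 with rfl | hL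
  · simp
  · rw [locKernel]; field_simp

theorem norm_aeval_avgPoly_le_one {z : ℂ} (hz : ‖z‖ = 1) (m : ℕ) : ‖aeval z (avgPoly m)‖ ≤ 1 := by
  have hsum : ‖∑ t ∈ range m, z ^ t‖ ≤ m := (norm_sum_le _ _).trans (by simp [hz])
  rw [avgPoly, map_mul, map_sum, norm_mul, aeval_C, norm_algebraMap', norm_inv,
    RCLike.norm_natCast]
  simp_rw [map_pow, aeval_X]
  exact inv_mul_le_one_of_le₀ hsum (Nat.cast_nonneg m)

theorem norm_aeval_avgPoly_mul_norm_sub_one_le {z : ℂ} (hz : ‖z‖ = 1) (m : ℕ) :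
    ‖aeval z (avgPoly m)‖ * (m * ‖z - 1‖) ≤ 2 := by
  have hgeom := congrArg (fun p => ‖aeval z p‖) (C_mul_avgPoly_mul_one_sub_X m)
  simp only [map_mul, map_sub, map_one, map_pow, aeval_X, aeval_C, norm_mul, norm_algebraMap',
    RCLike.norm_natCast, norm_sub_rev 1 z] at hgeom
  calc ‖aeval z (avgPoly m)‖ * (m * ‖z - 1‖) = ‖1 - z ^ m‖ := by rw [← hgeom]; ring
    _ ≤ ‖(1 : ℂ)‖ + ‖z ^ m‖ := norm_sub_le _ _
    _ = 2 := by rw [norm_pow, hz]; norm_num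

theorem norm_aeval_avgPoly_sq_le {L θ : ℝ} {m : ℕ} (hL : 0 ≤ L) (hLm : L ≤ m) :
    ‖aeval (𝐞 θ : ℂ) (avgPoly m)‖ ^ 2 ≤ 5 / (1 + (L * ‖(𝐞 θ : ℂ) - 1‖) ^ 2) := by
  have hone := norm_aeval_avgPoly_le_one (Circle.norm_coe (𝐞 θ)) m
  have htwo : ‖aeval (𝐞 θ : ℂ) (avgPoly m)‖ * (L * ‖(𝐞 θ : ℂ) - 1‖) ≤ 2 :=
    (by gcongr : _ ≤ _).trans (norm_aeval_avgPoly_mul_norm_sub_one_le (Circle.norm_coe (𝐞 θ)) m)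
  rw [le_div_iff₀ (by positivity), mul_add, mul_one, ← mul_pow]
  linarith [pow_le_pow_left₀ (norm_nonneg _) hone 2, pow_le_pow_left₀ (by positivity) htwo 2]

theorem norm_aeval_bumpPoly_le (m : ℕ) (θ : ℝ) :
    ‖aeval (𝐞 θ : ℂ) (bumpPoly m)‖ ≤ 50 * (locKernel m θ ^ 2 / m) := by
  have hf := norm_aeval_avgPoly_sq_le (θ := θ) (Nat.cast_nonneg m) le_rfl
  have hg := norm_aeval_avgPoly_sq_le (θ := θ) (m := 2 * m) (Nat.cast_nonneg m)
    (by exact_mod_cast Nat.le_mul_of_pos_left m two_pos)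
  rw [div_eq_mul_one_div] at hf hg
  rw [locKernel_sq_div]
  set q := 1 / (1 + (m * ‖(𝐞 θ : ℂ) - 1‖) ^ 2)
  simp only [bumpPoly, map_mul, map_add, map_pow, aeval_C, norm_mul, norm_pow, norm_algebraMap',
    norm_of_nonneg (show (0 : ℝ) ≤ m / 2 by positivity)]
  set f := aeval (𝐞 θ : ℂ) (avgPoly m)
  set g := aeval (𝐞 θ : ℂ) (avgPoly (2 * m))
  have hsum : ‖f ^ 2 + f * g + g ^ 2‖ ≤ 3 * (5 * q) := by
    refine (norm_add₃_le).trans ?_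
    rw [norm_mul, norm_pow, norm_pow]
    linarith [two_mul_le_add_sq ‖f‖ ‖g‖]
  calc (m : ℝ) / 2 * ‖f‖ ^ 2 * ‖f ^ 2 + f * g + g ^ 2‖
      ≤ m / 2 * (5 * q) * (3 * (5 * q)) := by gcongr
    _ ≤ 50 * (m * q ^ 2) := by nlinarith [mul_nonneg (Nat.cast_nonneg (α := ℝ) m) (sq_nonneg q)]

theorem norm_aeval_C_mul_avgPoly_mul_pow_le {m n : ℕ} (hmn : m ≤ n) (hnm : n ≤ 2 * m) (θ : ℝ) :
    ‖aeval (𝐞 θ : ℂ) (C (n : ℝ) * avgPoly n * avgPoly m ^ 3)‖ ≤ 50 * (locKernel m θ ^ 2 / m) := by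
  have hf := norm_aeval_avgPoly_sq_le (θ := θ) (Nat.cast_nonneg m) le_rfl
  have hg := norm_aeval_avgPoly_sq_le (θ := θ) (Nat.cast_nonneg m) (Nat.cast_le.2 hmn)
  rw [div_eq_mul_one_div] at hf hg
  rw [locKernel_sq_div]
  set q := 1 / (1 + (m * ‖(𝐞 θ : ℂ) - 1‖) ^ 2)
  simp only [map_mul, map_pow, aeval_C, norm_mul, norm_pow, norm_algebraMap', RCLike.norm_natCast]
  set f := aeval (𝐞 θ : ℂ) (avgPoly m)
  set g := aeval (𝐞 θ : ℂ) (avgPoly n)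
  have hgf : ‖g‖ * ‖f‖ ≤ 5 * q := by linarith [two_mul_le_add_sq ‖g‖ ‖f‖]
  calc (n : ℝ) * ‖g‖ * ‖f‖ ^ 3 = n * (‖g‖ * ‖f‖) * ‖f‖ ^ 2 := by ring
    _ ≤ (2 * m : ℕ) * (5 * q) * (5 * q) := by gcongr
    _ = 50 * (m * q ^ 2) := by push_cast; ring

theorem norm_aeval_pieceWeight_le {N : ℕ} (hN : N ≠ 0) {a : ℕ × Bool}
    (ha : a.1 ∈ range (Nat.log 2 N + 1)) (θ : ℝ) :
    ‖aeval (𝐞 θ : ℂ) (pieceWeight N (Nat.log 2 N) a)‖ ≤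
      50 * (locKernel (2 ^ a.1) θ ^ 2 / 2 ^ a.1) := by
  have hle := mem_range_succ_iff.1 ha
  unfold pieceWeight
  split_ifs with hlt hright
  · rw [map_mul, map_pow, aeval_X, norm_mul, norm_pow, Circle.norm_coe, one_pow, mul_one]
    exact_mod_cast norm_aeval_bumpPoly_le (2 ^ a.1) θ
  · simp only [map_zero, norm_zero]
    positivity
  · rw [le_antisymm hle (not_lt.1 hlt), map_mul, aeval_X, norm_mul, Circle.norm_coe, one_mul]
    exact_mod_cast norm_aeval_C_mul_avgPoly_mul_pow_le (Nat.pow_log_le_self 2 hN)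
      (by rw [← pow_succ']; exact (Nat.lt_pow_succ_log_self one_lt_two N).le) θ

end DyadicPieces

section LinearForms

open Real FourierTransform Polynomial

variable {ι : Type*} [Fintype ι]

theorem fourierChar_sum {κ : Type*} (s : Finset κ) (f : κ → ℝ) :
    (𝐞 (∑ i ∈ s, f i) : ℂ) = ∏ i ∈ s, (𝐞 (f i) : ℂ) := by
  induction s using Finset.cons_induction with
  | empty => simp
  | cons a s ha ih => rw [sum_cons, prod_cons, AddChar.map_add_eq_mul, Circle.coe_mul, ih]

theorem fourierChar_nat_mul (k : ℕ) (θ : ℝ) : (𝐞 (k * θ) : ℂ) = (𝐞 θ : ℂ) ^ k := by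
  rw [← nsmul_eq_mul, AddChar.map_nsmul_eq_pow, Circle.coe_pow]

/-- The product of the kernels `locKernel (L i)` along the linear form `n α`. -/
def locProd (L : ι → ℝ) (n : ℕ) (α : ι → ℝ) : ℝ := ∏ i, locKernel (L i) (n * α i)

theorem locProd_nonneg {L : ι → ℝ} (hL : ∀ i, 0 ≤ L i) (n : ℕ) (α : ι → ℝ) : 0 ≤ locProd L n α :=
  prod_nonneg fun i _ => locKernel_nonneg (hL i) _

theorem locProd_le {L : ι → ℝ} (hL : ∀ i, 0 ≤ L i) (n : ℕ) (α : ι → ℝ) :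
    locProd L n α ≤ ∏ i, L i :=
  prod_le_prod (fun i _ => locKernel_nonneg (hL i) _) fun i _ => locKernel_le (hL i) _

theorem locProd_zero_left (L : ι → ℝ) (α : ι → ℝ) : locProd L 0 α = ∏ i, L i := by
  simp [locProd, locKernel_zero]

theorem summable_sawCoeff_mul_locProd_sq_div {L : ι → ℝ} (hL : ∀ i, 1 ≤ L i) (α : ι → ℝ) :
    Summable fun n => sawCoeff (∏ i, L i) n * (locProd L n α ^ 2 / ∏ i, L i) := by
  have hL0 : ∀ i, 0 ≤ L i := fun i => zero_le_one.trans (hL i)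
  have hA : 0 < ∏ i, L i := prod_pos fun i _ => zero_lt_one.trans_le (hL i)
  refine Summable.of_nonneg_of_le
    (fun n => mul_nonneg (sawCoeff_nonneg hA.le n) (by positivity)) (fun n => ?_)
    ((summable_sawCoeff hA.le).mul_right (∏ i, L i))
  refine mul_le_mul_of_nonneg_left ?_ (sawCoeff_nonneg hA.le n)
  rw [div_le_iff₀ hA, ← pow_two]
  exact pow_le_pow_left₀ (locProd_nonneg hL0 n α) (locProd_le hL0 n α) 2

/-- The Erdős–Turán sum of a product of smooth bumps at the scales `L i`, each of them having
Fourier transform bounded by `locKernel (L i) ^ 2 / L i`. -/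
def pieceSum (L : ι → ℝ) (α : ι → ℝ) : ℝ :=
  ∑' n, sawCoeff (∏ i, L i) n * (locProd L n α ^ 2 / ∏ i, L i)

theorem pieceSum_nonneg {L : ι → ℝ} (hL : ∀ i, 1 ≤ L i) (α : ι → ℝ) : 0 ≤ pieceSum L α := by
  have hA : 0 ≤ ∏ i, L i := prod_nonneg fun i _ => zero_le_one.trans (hL i)
  exact tsum_nonneg fun n => mul_nonneg (sawCoeff_nonneg hA n) (by positivity)

variable [DecidableEq ι] {M : ℕ} (p : ι → ℝ[X])

theorem expSum_linearForm (hM : ∀ i, (p i).natDegree < M) (α : ι → ℝ) (n : ℕ) :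
    expSum (Fintype.piFinset fun _ : ι => range M) (fun k => ∏ i, (p i).coeff (k i))
      (fun k => ∑ i, k i * α i) n = ∏ i, aeval (𝐞 (n * α i) : ℂ) (p i) := by
  simp_rw [fun i => aeval_eq_sum_range' (hM i) (𝐞 (n * α i) : ℂ), prod_univ_sum, expSum]
  refine sum_congr rfl fun k _ => ?_
  rw [mul_sum, fourierChar_sum, Complex.ofReal_prod, ← prod_mul_distrib]
  refine prod_congr rfl fun i _ => ?_
  rw [Complex.real_smul, ← fourierChar_nat_mul, mul_left_comm]

variable {p} {L : ι → ℝ} {B : ℝ}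

theorem norm_expSum_linearForm_le (hM : ∀ i, (p i).natDegree < M)
    (hB : ∀ i θ, ‖aeval (𝐞 θ : ℂ) (p i)‖ ≤ B * (locKernel (L i) θ ^ 2 / L i)) (α : ι → ℝ) (n : ℕ) :
    ‖expSum (Fintype.piFinset fun _ : ι => range M) (fun k => ∏ i, (p i).coeff (k i))
      (fun k => ∑ i, k i * α i) n‖ ≤
        B ^ Fintype.card ι * (locProd L n α ^ 2 / ∏ i, L i) := by
  rw [expSum_linearForm p hM, norm_prod]
  refine (prod_le_prod (fun _ _ => norm_nonneg _) fun i _ => hB i _).trans_eq ?_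
  rw [prod_mul_distrib, prod_div_distrib, prod_pow, prod_const, card_univ, locProd]

theorem sum_prod_coeff_le (hM : ∀ i, (p i).natDegree < M)
    (hB : ∀ i θ, ‖aeval (𝐞 θ : ℂ) (p i)‖ ≤ B * (locKernel (L i) θ ^ 2 / L i)) :
    ∑ k ∈ Fintype.piFinset fun _ : ι => range M, ∏ i, (p i).coeff (k i) ≤
      B ^ Fintype.card ι * ∏ i, L i := by
  have h := norm_expSum_linearForm_le hM hB 0 0
  rw [locProd_zero_left, pow_two, mul_self_div_self] at h
  refine (le_abs_self _).trans (le_trans (le_of_eq ?_) h)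
  rw [← norm_eq_abs, ← Complex.norm_real]
  simp [expSum]

theorem abs_sum_prod_coeff_mul_indicator_sub_le (hp : ∀ i, p i ∈ nonnegCoeff ℝ)
    (hM : ∀ i, (p i).natDegree < M) (hL : ∀ i, 1 ≤ L i)
    (hB : ∀ i θ, ‖aeval (𝐞 θ : ℂ) (p i)‖ ≤ B * (locKernel (L i) θ ^ 2 / L i))
    (α : ι → ℝ) {x : ℝ} (hx : x ∈ Set.Icc 0 1) :
    |∑ k ∈ Fintype.piFinset fun _ : ι => range M, (∏ i, (p i).coeff (k i)) *
      ((if Int.fract (∑ i, k i * α i) < x then 1 else 0) - x)| ≤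
        2 * B ^ Fintype.card ι * (1 + pieceSum L α) := by
  have hA : 1 ≤ ∏ i, L i := Finset.one_le_prod fun i _ => hL i
  have hA0 : 0 < ∏ i, L i := zero_lt_one.trans_le hA
  have hW : ∀ k ∈ Fintype.piFinset fun _ : ι => range M, 0 ≤ ∏ i, (p i).coeff (k i) :=
    fun k _ => prod_nonneg fun i _ => hp i _
  refine (abs_sum_mul_indicator_sub_le _ hW hA hx).trans ?_
  rw [mul_assoc, mul_one_add]
  gcongr
  · exact (div_le_iff₀ hA0).2 (sum_prod_coeff_le hM hB)
  · rw [pieceSum, ← tsum_mul_left]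
    refine (summable_sawCoeff_mul_norm_expSum _ hW hA0.le).tsum_le_tsum (fun n => ?_)
      ((summable_sawCoeff_mul_locProd_sq_div hL α).mul_left _)
    rw [mul_left_comm]
    exact mul_le_mul_of_nonneg_left (norm_expSum_linearForm_le hM hB α n)
      (sawCoeff_nonneg hA0.le n)

theorem sum_prod_sum_mul {κ σ : Type*} (S : Finset (ι → κ)) (I : Finset σ) (ε : σ → ℝ)
    (f : σ → κ → ℝ) (χ : (ι → κ) → ℝ) :
    ∑ k ∈ S, (∏ i, ∑ a ∈ I, ε a * f a (k i)) * χ k =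
      ∑ a ∈ Fintype.piFinset fun _ : ι => I,
        (∏ i, ε (a i)) * ∑ k ∈ S, (∏ i, f (a i) (k i)) * χ k := by
  simp_rw [prod_univ_sum, prod_mul_distrib, sum_mul, mul_sum, mul_assoc]
  exact sum_comm

theorem sum_piFinset_eq_sum_prod_ite {κ : Type*} [DecidableEq κ] {s t : Finset κ} (hst : s ⊆ t)
    (χ : (ι → κ) → ℝ) :
    ∑ k ∈ Fintype.piFinset fun _ : ι => s, χ k =
      ∑ k ∈ Fintype.piFinset fun _ : ι => t, (∏ i, if k i ∈ s then 1 else 0) * χ k := by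
  simp_rw [prod_ite_zero, prod_const_one, ite_mul, one_mul, zero_mul, mem_univ, true_imp_iff,
    ← Fintype.mem_piFinset (t := fun _ : ι => s), sum_ite_mem]
  rw [inter_eq_right.2 (Fintype.piFinset_subset _ _ fun _ => hst)]

/-- The indices of the products of pieces at scales less than `2 ^ m`. -/
def pieceIndex (ι : Type*) [Fintype ι] [DecidableEq ι] (m : ℕ) : Finset (ι → ℕ × Bool) :=
  Fintype.piFinset fun _ => range m ×ˢ univ

theorem pieceIndex_mono : Monotone (pieceIndex ι) := fun _ _ hm =>
  Fintype.piFinset_subset _ _ fun _ => product_subset_product_left (range_subset_range.2 hm)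

/-- The scales of the product of pieces of index `a`. -/
def pieceScale {ι : Type*} (a : ι → ℕ × Bool) (i : ι) : ℝ := 2 ^ (a i).1

theorem one_le_pieceScale {ι : Type*} (a : ι → ℕ × Bool) (i : ι) : 1 ≤ pieceScale a i :=
  one_le_pow₀ one_le_two

theorem card_pieceIndex (m : ℕ) : #(pieceIndex ι m) = (2 * m) ^ Fintype.card ι := by
  rw [pieceIndex, Fintype.card_piFinset, prod_const, card_univ, card_product, card_range, card_univ,
    Fintype.card_bool, mul_comm m]

theorem discLF_eq_sum (d N : ℕ) (α : Fin d → ℝ) (x : ℝ) :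
    DiscLF d N α x = ∑ k ∈ Fintype.piFinset fun _ : Fin d => Icc 1 N,
      ((if Int.fract (∑ i, k i * α i) < x then 1 else 0) - x) := by
  simp [DiscLF, sum_sub_distrib]

theorem exists_discLF_eq_sum_pieceWeight (d N J : ℕ) (α : Fin d → ℝ) (x : ℝ) :
    ∃ M, (∀ a ∈ range (J + 1) ×ˢ univ, (pieceWeight N J a).natDegree < M) ∧
      DiscLF d N α x = ∑ a ∈ pieceIndex (Fin d) (J + 1), (∏ i, (-1) ^ (a i).2.toNat) *
        ∑ k ∈ Fintype.piFinset fun _ => range M, (∏ i, (pieceWeight N J (a i)).coeff (k i)) *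
          ((if Int.fract (∑ i, k i * α i) < x then 1 else 0) - x) := by
  set M := N + (range (J + 1) ×ˢ univ).sup (fun a => (pieceWeight N J a).natDegree) + 1
  have hsub : Icc 1 N ⊆ range M := fun k hk =>
    mem_range.2 (by have := (mem_Icc.1 hk).2; lia)
  refine ⟨M, fun a ha => ?_, ?_⟩
  · have := le_sup (f := fun a => (pieceWeight N J a).natDegree) ha
    lia
  · simp_rw [discLF_eq_sum, sum_piFinset_eq_sum_prod_ite hsub,
      ite_mem_Icc_eq_sum_coeff_pieceWeight N J]
    exact sum_prod_sum_mul _ _ (fun a : ℕ × Bool => (-1) ^ a.2.toNat)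
      (fun a => (pieceWeight N J a).coeff)
      fun k => (if Int.fract (∑ i, k i * α i) < x then 1 else 0) - x

theorem abs_discLF_le {d N : ℕ} (hN : N ≠ 0) (α : Fin d → ℝ) {x : ℝ} (hx : x ∈ Set.Icc 0 1) :
    |DiscLF d N α x| ≤
      ∑ a ∈ pieceIndex (Fin d) (Nat.log 2 N + 1), 2 * 50 ^ d * (1 + pieceSum (pieceScale a) α) := by
  obtain ⟨M, hM, hdisc⟩ := exists_discLF_eq_sum_pieceWeight d N (Nat.log 2 N) α x
  rw [hdisc]
  refine (abs_sum_le_sum_abs _ _).trans (sum_le_sum fun a ha => ?_)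
  have ha' := Fintype.mem_piFinset.1 ha
  simp_rw [abs_mul, abs_prod, abs_pow, abs_neg, abs_one, one_pow, prod_const_one, one_mul]
  simpa only [Fintype.card_fin] using abs_sum_prod_coeff_mul_indicator_sub_le
    (fun i => pieceWeight_mem_nonnegCoeff N _ (a i)) (fun i => hM _ (ha' i)) (one_le_pieceScale a)
    (fun i => norm_aeval_pieceWeight_le hN (mem_product.1 (ha' i)).1) α hx

end LinearForms

section KernelIntegral

open Real FourierTransform

theorem abs_le_norm_fourierChar_sub_one {t : ℝ} (ht : |t| ≤ 1 / 2) :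
    |t| ≤ ‖(𝐞 t : ℂ) - 1‖ := by
  have hchord : ‖(𝐞 t : ℂ) - 1‖ = 2 * |sin (π * t)| := by
    rw [fourierChar_apply, mul_comm _ Complex.I, Complex.norm_exp_I_mul_ofReal_sub_one, norm_mul,
      norm_eq_abs, norm_eq_abs, abs_two, mul_assoc, mul_div_cancel_left₀ _ two_ne_zero]
  have hπt : |π * t| ≤ π / 2 := by
    rw [abs_mul, abs_of_pos pi_pos]
    nlinarith [pi_pos]
  have hjordan := mul_abs_le_abs_sin hπt
  rw [abs_mul, abs_of_pos pi_pos, ← mul_assoc, div_mul_cancel₀ _ pi_ne_zero] at hjordan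
  linarith [abs_nonneg t]

theorem continuous_locKernel (L : ℝ) : Continuous (locKernel L) := by
  unfold locKernel
  refine continuous_const.div ?_ fun x => by positivity
  have := continuous_fourierChar
  fun_prop

theorem locKernel_periodic (L : ℝ) : Function.Periodic (locKernel L) 1 := fun θ => by
  have hone : 𝐞 (1 : ℝ) = 1 := by simp [fourierChar_apply', Circle.exp_two_pi]
  rw [locKernel, locKernel, AddChar.map_add_eq_mul, hone, mul_one]

theorem intervalIntegral_locKernel_le_pi {L : ℝ} (hL : 0 ≤ L) (a : ℝ) :
    ∫ x in a..a + 1, locKernel L x ≤ π := by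
  have hdom : Continuous fun x : ℝ => L * (1 + (L * x) ^ 2)⁻¹ :=
    continuous_const.mul (Continuous.inv₀ (by fun_prop) fun x => by positivity)
  calc ∫ x in a..a + 1, locKernel L x = ∫ x in -(1 / 2)..-(1 / 2) + 1, locKernel L x :=
        (locKernel_periodic L).intervalIntegral_add_eq a _
    _ = ∫ x in -(1 / 2)..1 / 2, locKernel L x := by norm_num
    _ ≤ ∫ x in -(1 / 2)..1 / 2, L * (1 + (L * x) ^ 2)⁻¹ := by
        refine intervalIntegral.integral_mono_on (by norm_num)
          ((continuous_locKernel L).intervalIntegrable _ _) (hdom.intervalIntegrable _ _)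
          fun x hx => ?_
        have hchord := abs_le_norm_fourierChar_sub_one (abs_le.2 hx)
        rw [locKernel, div_eq_mul_inv, mul_pow, mul_pow, ← sq_abs x]
        gcongr
    _ = arctan (L * (1 / 2)) - arctan (L * -(1 / 2)) := by
        rw [intervalIntegral.integral_const_mul,
          intervalIntegral.mul_integral_comp_mul_left (f := fun x => (1 + x ^ 2)⁻¹),
          integral_inv_one_add_sq]
    _ ≤ π := by
        linarith [arctan_lt_pi_div_two (L * (1 / 2)), neg_pi_div_two_lt_arctan (L * -(1 / 2))]

theorem setIntegral_locKernel_nat_mul_le_pi {L : ℝ} (hL : 0 ≤ L) {n : ℕ} (hn : n ≠ 0) (a : ℝ) :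
    ∫ x in Set.Ioc a (a + 1), locKernel L (n * x) ≤ π := by
  have hn' : (n : ℝ) ≠ 0 := Nat.cast_ne_zero.2 hn
  have hperiods := (locKernel_periodic L).intervalIntegral_add_zsmul_eq n (n * a)
    fun _ _ => (continuous_locKernel L).intervalIntegrable _ _
  rw [zsmul_one, zsmul_eq_mul, Int.cast_natCast] at hperiods
  rw [← intervalIntegral.integral_of_le (by linarith),
    intervalIntegral.integral_comp_mul_left _ hn', mul_add, mul_one, hperiods, smul_eq_mul,
    inv_mul_cancel_left₀ hn']
  exact intervalIntegral_locKernel_le_pi hL _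

variable {ι : Type*} [Fintype ι]

theorem continuous_locProd (L : ι → ℝ) (n : ℕ) : Continuous (locProd L n) :=
  continuous_finsetProd _ fun i _ => (continuous_locKernel (L i)).comp (by fun_prop)

theorem lintegral_locProd_le {L : ι → ℝ} (hL : ∀ i, 0 ≤ L i) {n : ℕ} (hn : n ≠ 0) (c : ι → ℝ) :
    ∫⁻ α in Set.univ.pi fun i => Set.Ioc (c i) (c i + 1), ENNReal.ofReal (locProd L n α) ≤
      ENNReal.ofReal (π ^ Fintype.card ι) := by
  have hint : Integrable (locProd L n)
      (Measure.pi fun i => volume.restrict (Set.Ioc (c i) (c i + 1))) := by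
    refine Integrable.fintype_prod (f := fun i x => locKernel (L i) (n * x)) fun i => ?_
    have hcont : Continuous fun x => locKernel (L i) (n * x) :=
      (continuous_locKernel (L i)).comp (by fun_prop)
    exact hcont.integrableOn_Icc.mono_set Set.Ioc_subset_Icc_self
  rw [volume_pi, Measure.restrict_pi_pi,
    ← ofReal_integral_eq_lintegral_ofReal hint (ae_of_all _ fun _ => locProd_nonneg hL _ _)]
  refine ENNReal.ofReal_le_ofReal ?_
  unfold locProd
  rw [integral_fintype_prod_eq_prod fun i x => locKernel (L i) (n * x)]
  refine (prod_le_prod (fun i _ => integral_nonneg fun x => locKernel_nonneg (hL i) _)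
    fun i _ => setIntegral_locKernel_nat_mul_le_pi (hL i) hn (c i)).trans_eq ?_
  rw [prod_const, card_univ]

end KernelIntegral

section Coefficients

open Real

theorem sum_Ioc_floor_inv_le {A B : ℝ} (hA : 1 ≤ A) (hB : 0 < B) (hBA : B ≤ A) :
    ∑ n ∈ Ioc ⌊B⌋₊ ⌊A⌋₊, (n : ℝ)⁻¹ ≤ 1 + log (A / B) := by
  have hharmonic : ∀ m : ℕ, (harmonic m : ℝ) = ∑ n ∈ Ioc 0 m, (n : ℝ)⁻¹ := fun m => by
    rw [harmonic_eq_sum_Icc]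
    push_cast
    rfl
  have hsplit := sum_Ioc_consecutive (fun n : ℕ => (n : ℝ)⁻¹) (Nat.zero_le _)
    (Nat.floor_le_floor hBA)
  rw [← hharmonic, ← hharmonic] at hsplit
  rw [log_div (by positivity) hB.ne']
  linarith [harmonic_floor_le_one_add_log A hA, log_le_harmonic_floor B hB.le]

theorem mul_sum_inv_sq_le_two {A : ℝ} (hA : 0 ≤ A) {s : Finset ℕ} (hs : ∀ n ∈ s, A < n) :
    ∑ n ∈ s, A / (n : ℝ) ^ 2 ≤ 2 := by
  obtain ⟨K, hK⟩ := s.exists_nat_subset_range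
  have hsub : s ⊆ Ioo ⌊A⌋₊ K := fun n hn =>
    mem_Ioo.2 ⟨(Nat.floor_lt hA).2 (hs n hn), mem_range.1 (hK hn)⟩
  calc ∑ n ∈ s, A / (n : ℝ) ^ 2 ≤ ∑ n ∈ Ioo ⌊A⌋₊ K, A / (n : ℝ) ^ 2 :=
        sum_le_sum_of_subset_of_nonneg hsub fun _ _ _ => by positivity
    _ = A * ∑ n ∈ Ioo ⌊A⌋₊ K, ((n : ℝ) ^ 2)⁻¹ := by simp_rw [mul_sum, div_eq_mul_inv]
    _ ≤ (⌊A⌋₊ + 1) * (2 / (⌊A⌋₊ + 1)) := by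
        gcongr
        exacts [(Nat.lt_floor_add_one A).le, sum_Ioo_inv_sq_le _ _]
    _ = 2 := mul_div_cancel₀ _ (by positivity)

theorem sum_sawCoeff_le {A R : ℝ} (hA : 1 ≤ A) (hR : 1 ≤ R) {s : Finset ℕ}
    (hs : ∀ n ∈ s, A < n * R) : ∑ n ∈ s, sawCoeff A n ≤ 3 + log R := by
  have hA0 : 0 < A := by positivity
  have hR0 : 0 < R := by positivity
  have hsub : (s.filter fun n : ℕ => (n : ℝ) ≤ A) ⊆ Ioc ⌊A / R⌋₊ ⌊A⌋₊ := fun n hn => by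
    obtain ⟨hns, hnA⟩ := mem_filter.1 hn
    exact mem_Ioc.2 ⟨(Nat.floor_lt (by positivity)).2 ((div_lt_iff₀ hR0).2 (hs n hns)),
      Nat.le_floor hnA⟩
  have hhead : ∑ n ∈ s.filter fun n : ℕ => (n : ℝ) ≤ A, sawCoeff A n ≤ 1 + log R := by
    calc ∑ n ∈ s.filter fun n : ℕ => (n : ℝ) ≤ A, sawCoeff A n
      _ ≤ ∑ n ∈ s.filter fun n : ℕ => (n : ℝ) ≤ A, (n : ℝ)⁻¹ :=
          sum_le_sum fun n _ => (min_le_left _ _).trans_eq (one_div _)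
      _ ≤ ∑ n ∈ Ioc ⌊A / R⌋₊ ⌊A⌋₊, (n : ℝ)⁻¹ :=
          sum_le_sum_of_subset_of_nonneg hsub fun _ _ _ => by positivity
      _ ≤ 1 + log (A / (A / R)) :=
          sum_Ioc_floor_inv_le hA (by positivity) (div_le_self hA0.le hR)
      _ = 1 + log R := by rw [div_div_cancel₀ hA0.ne']
  have htail : ∑ n ∈ s.filter fun n : ℕ => ¬(n : ℝ) ≤ A, sawCoeff A n ≤ 2 :=
    (sum_le_sum fun n _ => min_le_right _ _).trans
      (mul_sum_inv_sq_le_two hA0.le fun n hn => not_le.1 (mem_filter.1 hn).2)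
  rw [← sum_filter_add_sum_filter_not s fun n : ℕ => (n : ℝ) ≤ A]
  linarith

theorem sum_range_sqrt_inv_le (m : ℕ) : ∑ n ∈ range (m + 1), √(1 / (n : ℝ)) ≤ 2 * √m := by
  induction m with
  | zero => simp
  | succ m ih =>
    have hpos : 0 < √(m + 1 : ℝ) := sqrt_pos.2 (by positivity)
    have hstep : √(1 / (m + 1 : ℝ)) ≤ 2 * √(m + 1 : ℝ) - 2 * √m := by
      rw [one_div, sqrt_inv, ← one_div, div_le_iff₀ hpos]
      nlinarith [sq_sqrt (show (0 : ℝ) ≤ m + 1 by positivity), sq_sqrt (Nat.cast_nonneg (α := ℝ) m),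
        sq_nonneg (√(m + 1 : ℝ) - √m)]
    rw [sum_range_succ]
    push_cast
    linarith

theorem sum_sqrt_sawCoeff_div_le {A R : ℝ} (hA : 0 < A) (hR : 0 < R) {s : Finset ℕ}
    (hs : ∀ n ∈ s, n * R ≤ A) : ∑ n ∈ s, √(sawCoeff A n / A) ≤ 2 / √R := by
  have hsub : s ⊆ range (⌊A / R⌋₊ + 1) := fun n hn =>
    mem_range_succ_iff.2 (Nat.le_floor ((le_div_iff₀ hR).2 (hs n hn)))
  calc ∑ n ∈ s, √(sawCoeff A n / A) ≤ ∑ n ∈ s, √(1 / (n : ℝ)) / √A := by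
        refine sum_le_sum fun n _ => ?_
        rw [← sqrt_div (by positivity)]
        gcongr
        exact min_le_left _ _
    _ ≤ ∑ n ∈ range (⌊A / R⌋₊ + 1), √(1 / (n : ℝ)) / √A :=
        sum_le_sum_of_subset_of_nonneg hsub fun _ _ _ => by positivity
    _ ≤ 2 * √(A / R) / √A := by
        rw [← sum_div]
        gcongr
        refine (sum_range_sqrt_inv_le _).trans ?_
        gcongr
        exact Nat.floor_le (by positivity)
    _ = 2 / √R := by
        have := sqrt_pos.2 hA
        rw [sqrt_div hA.le]
        field_simp

/-- The weight given to `locProd L n` in the moment estimate, where `A` is the product of the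
scales `L`. The high frequencies `n > A / R` are treated by the first moment, normalised by `lam`,
and the others by the moment of order `1 / 2`. -/
def momentCoeff (A R lam : ℝ) (n : ℕ) : ℝ :=
  if A < n * R then sawCoeff A n / lam else √(sawCoeff A n / A)

theorem momentCoeff_zero {A : ℝ} (R lam : ℝ) : momentCoeff A R lam 0 = 0 := by
  simp [momentCoeff, sawCoeff]

variable {A R lam : ℝ}

theorem momentCoeff_nonneg (hA : 0 ≤ A) (hlam : 0 ≤ lam) (n : ℕ) : 0 ≤ momentCoeff A R lam n := by
  have := sawCoeff_nonneg hA n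
  unfold momentCoeff
  positivity

theorem sum_momentCoeff_le (hA : 1 ≤ A) (hR : 1 ≤ R) (hlam : 0 < lam) (s : Finset ℕ) :
    ∑ n ∈ s, momentCoeff A R lam n ≤ (3 + log R) / lam + 2 / √R := by
  simp_rw [momentCoeff]
  rw [sum_ite, ← sum_div]
  gcongr
  · exact sum_sawCoeff_le hA hR fun n hn => (mem_filter.1 hn).2
  · exact sum_sqrt_sawCoeff_div_le (by positivity) (by positivity)
      fun n hn => not_lt.1 (mem_filter.1 hn).2

theorem summable_momentCoeff (hA : 1 ≤ A) (hR : 1 ≤ R) (hlam : 0 < lam) :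
    Summable (momentCoeff A R lam) :=
  summable_of_sum_le (momentCoeff_nonneg (zero_le_one.trans hA) hlam.le)
    (sum_momentCoeff_le hA hR hlam)

theorem tsum_momentCoeff_le (hA : 1 ≤ A) (hR : 1 ≤ R) (hlam : 0 < lam) :
    ∑' n, momentCoeff A R lam n ≤ (3 + log R) / lam + 2 / √R :=
  Real.tsum_le_of_sum_le (momentCoeff_nonneg (zero_le_one.trans hA) hlam.le)
    (sum_momentCoeff_le hA hR hlam)

theorem sawCoeff_mul_sq_div_le (hA : 0 < A) (hlam : 0 < lam) {P : ℝ} (hP : 0 ≤ P) (hPA : P ≤ A)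
    (n : ℕ) : sawCoeff A n * (P ^ 2 / A) ≤
      lam * (momentCoeff A R lam n * P) + (momentCoeff A R lam n * P) ^ 2 := by
  have hc := sawCoeff_nonneg hA.le n
  have hb := momentCoeff_nonneg (R := R) hA.le hlam.le n
  by_cases hhigh : A < n * R
  · refine le_add_of_le_of_nonneg ?_ (by positivity)
    rw [momentCoeff, if_pos hhigh, ← mul_assoc, mul_div_cancel₀ _ hlam.ne']
    gcongr
    rw [div_le_iff₀ hA, pow_two]
    gcongr
  · refine le_add_of_nonneg_of_le (by positivity) (le_of_eq ?_)
    rw [momentCoeff, if_neg hhigh, mul_pow, sq_sqrt (by positivity)]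
    ring

end Coefficients

section Moments

open Real

theorem ae_of_forall_ae_restrict_Ioc_int {ι : Type*} [Fintype ι] {P : (ι → ℝ) → Prop}
    (hP : ∀ c : ι → ℤ, ∀ᵐ α ∂volume.restrict (Set.univ.pi fun i => Set.Ioc (c i : ℝ) (c i + 1)),
      P α) : ∀ᵐ α, P α := by
  have hcube : ∀ c : ι → ℤ, ∀ᵐ α, α ∈ (Set.univ.pi fun i => Set.Ioc (c i : ℝ) (c i + 1)) → P α :=
    fun c => (ae_restrict_iff' (MeasurableSet.univ_pi fun _ => measurableSet_Ioc)).1 (hP c)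
  filter_upwards [ae_all_iff.2 hcube] with α hα
  refine hα (fun i => ⌈α i⌉ - 1) fun i _ => ?_
  push_cast
  constructor <;> linarith [Int.ceil_lt_add_one (α i), Int.le_ceil (α i)]

theorem ae_exists_forall_le_of_lintegral_le {X : Type*} [MeasurableSpace X] {μ : Measure X}
    {f : ℕ → X → ℝ} {b : ℕ → ℝ} (hf : ∀ s, Measurable (f s)) (hb : Summable b)
    (hint : ∀ s, ∫⁻ x, ENNReal.ofReal (f s x) ∂μ ≤ ENNReal.ofReal (b s)) :
    ∀ᵐ x ∂μ, ∃ M, ∀ s, f s x ≤ M := by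
  have hfin : ∫⁻ x, ∑' s, ENNReal.ofReal (f s x) ∂μ ≠ ⊤ := by
    rw [lintegral_tsum fun s => (hf s).ennreal_ofReal.aemeasurable]
    exact ne_top_of_le_ne_top hb.tsum_ofReal_ne_top (ENNReal.tsum_le_tsum hint)
  filter_upwards [ae_lt_top (Measurable.tsum fun s => (hf s).ennreal_ofReal) hfin] with x hx
  exact ⟨_, fun s => (ENNReal.ofReal_le_iff_le_toReal hx.ne).1 (ENNReal.le_tsum s)⟩

variable {ι : Type*} [Fintype ι] {L : ι → ℝ} {R lam : ℝ}

/-- The sum of the `momentCoeff`-weighted kernels of a product piece at the scales `L`. Unlike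
`pieceSum`, it is linear in the kernels, so that its mean over a unit cube is under control. -/
def momentSum (R lam : ℝ) (L α : ι → ℝ) : ℝ :=
  ∑' n, momentCoeff (∏ i, L i) R lam n * locProd L n α

theorem momentCoeff_mul_locProd_nonneg (hL : ∀ i, 1 ≤ L i) (hlam : 0 < lam) (α : ι → ℝ) (n : ℕ) :
    0 ≤ momentCoeff (∏ i, L i) R lam n * locProd L n α :=
  have hL0 : ∀ i, 0 ≤ L i := fun i => zero_le_one.trans (hL i)
  mul_nonneg (momentCoeff_nonneg (prod_nonneg fun i _ => hL0 i) hlam.le n) (locProd_nonneg hL0 n α)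

theorem momentSum_nonneg (hL : ∀ i, 1 ≤ L i) (hlam : 0 < lam) (α : ι → ℝ) :
    0 ≤ momentSum R lam L α :=
  tsum_nonneg (momentCoeff_mul_locProd_nonneg hL hlam α)

theorem momentCoeff_mul_locProd_le (hL : ∀ i, 1 ≤ L i) (hlam : 0 < lam) (α : ι → ℝ) (n : ℕ) :
    momentCoeff (∏ i, L i) R lam n * locProd L n α ≤
      momentCoeff (∏ i, L i) R lam n * ∏ i, L i :=
  have hL0 : ∀ i, 0 ≤ L i := fun i => zero_le_one.trans (hL i)
  mul_le_mul_of_nonneg_left (locProd_le hL0 n α)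
    (momentCoeff_nonneg (prod_nonneg fun i _ => hL0 i) hlam.le n)

theorem summable_momentCoeff_mul_locProd (hL : ∀ i, 1 ≤ L i) (hR : 1 ≤ R) (hlam : 0 < lam)
    (α : ι → ℝ) : Summable fun n => momentCoeff (∏ i, L i) R lam n * locProd L n α :=
  .of_nonneg_of_le (momentCoeff_mul_locProd_nonneg hL hlam α)
    (momentCoeff_mul_locProd_le hL hlam α)
    ((summable_momentCoeff (Finset.one_le_prod fun i _ => hL i) hR hlam).mul_right _)

theorem continuous_momentSum (hL : ∀ i, 1 ≤ L i) (hR : 1 ≤ R) (hlam : 0 < lam) :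
    Continuous (momentSum R lam L) := by
  have hA : 1 ≤ ∏ i, L i := Finset.one_le_prod fun i _ => hL i
  refine continuous_tsum (fun n => (continuous_locProd L n).const_mul _)
    ((summable_momentCoeff hA hR hlam).mul_right (∏ i, L i)) fun n α => ?_
  rw [norm_of_nonneg (momentCoeff_mul_locProd_nonneg hL hlam α n)]
  exact momentCoeff_mul_locProd_le hL hlam α n

theorem lintegral_momentCoeff_mul_locProd_le (hL : ∀ i, 1 ≤ L i) (hlam : 0 < lam) (n : ℕ)
    (c : ι → ℝ) :
    ∫⁻ α in Set.univ.pi fun i => Set.Ioc (c i) (c i + 1),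
        ENNReal.ofReal (momentCoeff (∏ i, L i) R lam n * locProd L n α) ≤
      ENNReal.ofReal (momentCoeff (∏ i, L i) R lam n * π ^ Fintype.card ι) := by
  rcases eq_or_ne n 0 with rfl | hn
  · simp [momentCoeff_zero]
  · have hL0 : ∀ i, 0 ≤ L i := fun i => zero_le_one.trans (hL i)
    have hA : 0 ≤ ∏ i, L i := prod_nonneg fun i _ => hL0 i
    have hcoeff := momentCoeff_nonneg (R := R) hA hlam.le n
    simp_rw [ENNReal.ofReal_mul hcoeff]
    rw [lintegral_const_mul' _ _ ENNReal.ofReal_ne_top]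
    gcongr
    exact lintegral_locProd_le hL0 hn c

theorem lintegral_momentSum_le (hL : ∀ i, 1 ≤ L i) (hR : 1 ≤ R) (hlam : 0 < lam) (c : ι → ℝ) :
    ∫⁻ α in Set.univ.pi fun i => Set.Ioc (c i) (c i + 1), ENNReal.ofReal (momentSum R lam L α) ≤
      ENNReal.ofReal (((3 + log R) / lam + 2 / √R) * π ^ Fintype.card ι) := by
  have hA : 1 ≤ ∏ i, L i := Finset.one_le_prod fun i _ => hL i
  have hcoeff := momentCoeff_nonneg (R := R) (zero_le_one.trans hA) hlam.le
  simp_rw [momentSum, fun α => ENNReal.ofReal_tsum_of_nonneg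
    (momentCoeff_mul_locProd_nonneg hL hlam α) (summable_momentCoeff_mul_locProd hL hR hlam α)]
  rw [lintegral_tsum fun n =>
    ((continuous_locProd L n).measurable.const_mul _).ennreal_ofReal.aemeasurable]
  refine (ENNReal.tsum_le_tsum fun n => lintegral_momentCoeff_mul_locProd_le hL hlam n c).trans ?_
  rw [← ENNReal.ofReal_tsum_of_nonneg (fun n => mul_nonneg (hcoeff n) (by positivity))
    ((summable_momentCoeff hA hR hlam).mul_right _), tsum_mul_right]
  gcongr
  exact tsum_momentCoeff_le hA hR hlam

theorem pieceSum_le_momentSum (hL : ∀ i, 1 ≤ L i) (hR : 1 ≤ R) (hlam : 0 < lam) (α : ι → ℝ) :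
    pieceSum L α ≤ lam * momentSum R lam L α + momentSum R lam L α ^ 2 := by
  have hL0 : ∀ i, 0 ≤ L i := fun i => zero_le_one.trans (hL i)
  have hA : 0 < ∏ i, L i := prod_pos fun i _ => zero_lt_one.trans_le (hL i)
  have hb := momentCoeff_mul_locProd_nonneg (R := R) hL hlam α
  refine Real.tsum_le_of_sum_range_le
    (fun n => mul_nonneg (sawCoeff_nonneg hA.le n) (by positivity)) fun k => ?_
  calc ∑ n ∈ range k, sawCoeff (∏ i, L i) n * (locProd L n α ^ 2 / ∏ i, L i)
    _ ≤ ∑ n ∈ range k, (lam * (momentCoeff (∏ i, L i) R lam n * locProd L n α) +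
          (momentCoeff (∏ i, L i) R lam n * locProd L n α) ^ 2) :=
        sum_le_sum fun n _ =>
          sawCoeff_mul_sq_div_le hA hlam (locProd_nonneg hL0 n α) (locProd_le hL0 n α) n
    _ ≤ lam * ∑ n ∈ range k, momentCoeff (∏ i, L i) R lam n * locProd L n α +
          (∑ n ∈ range k, momentCoeff (∏ i, L i) R lam n * locProd L n α) ^ 2 := by
        rw [sum_add_distrib, ← mul_sum]
        gcongr
        exact sum_sq_le_sq_sum_of_nonneg fun n _ => hb n
    _ ≤ lam * momentSum R lam L α + momentSum R lam L α ^ 2 := by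
        have hpartial := (summable_momentCoeff_mul_locProd hL hR hlam α).sum_le_tsum (range k)
          fun n _ => hb n
        have hnonneg := sum_nonneg fun n (_ : n ∈ range k) => hb n
        rw [momentSum]
        gcongr

theorem sum_pieceSum_le {κ : Type*} {I : Finset κ} {L : κ → ι → ℝ} (hL : ∀ a i, 1 ≤ L a i)
    (hR : 1 ≤ R) (hlam : 0 < lam) (α : ι → ℝ) :
    ∑ a ∈ I, pieceSum (L a) α ≤
      lam * ∑ a ∈ I, momentSum R lam (L a) α + (∑ a ∈ I, momentSum R lam (L a) α) ^ 2 := by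
  refine (sum_le_sum fun a _ => pieceSum_le_momentSum (hL a) hR hlam α).trans ?_
  rw [sum_add_distrib, ← mul_sum]
  gcongr
  exact sum_sq_le_sq_sum_of_nonneg fun a _ => momentSum_nonneg (hL a) hlam α

variable [DecidableEq ι]

theorem ae_exists_forall_sum_momentSum_le {m : ℕ → ℕ} {R lam : ℕ → ℝ} (hR : ∀ s, 1 ≤ R s)
    (hlam : ∀ s, 0 < lam s) (hsum : Summable fun s =>
      (2 * m s : ℝ) ^ Fintype.card ι * ((3 + log (R s)) / lam s + 2 / √(R s))) :
    ∀ᵐ α, ∃ M, ∀ s, ∑ a ∈ pieceIndex ι (m s), momentSum (R s) (lam s) (pieceScale a) α ≤ M := by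
  have hmeas : ∀ s a, Measurable (momentSum (R s) (lam s) (pieceScale (ι := ι) a)) := fun s a =>
    (continuous_momentSum (one_le_pieceScale a) (hR s) (hlam s)).measurable
  refine ae_of_forall_ae_restrict_Ioc_int fun c => ae_exists_forall_le_of_lintegral_le
    (fun s => Finset.measurable_fun_sum _ fun a _ => hmeas s a)
    (hsum.mul_right (π ^ Fintype.card ι)) fun s => ?_
  simp_rw [fun α => ENNReal.ofReal_sum_of_nonneg fun a (_ : a ∈ pieceIndex ι (m s)) =>
    momentSum_nonneg (R := R s) (one_le_pieceScale a) (hlam s) α]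
  rw [lintegral_finsetSum _ fun a _ => (hmeas s a).ennreal_ofReal]
  refine (sum_le_card_nsmul _ _ _ fun a _ =>
    lintegral_momentSum_le (one_le_pieceScale a) (hR s) (hlam s) _).trans_eq ?_
  rw [card_pieceIndex, ← ENNReal.ofReal_nsmul, nsmul_eq_mul, mul_assoc]
  push_cast
  rfl

end Moments

section Scales

open Real

theorem natLog_two_add_one_le_floor {N : ℕ} {t : ℝ} (ht : 1 ≤ t) (hN : log N ≤ t) :
    Nat.log 2 N + 1 ≤ ⌊3 * t⌋₊ := by
  have hlogb : (Nat.log 2 N : ℝ) ≤ log N / log 2 := natLog_le_logb N 2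
  have htwo : log N / log 2 ≤ 2 * t := by
    rw [div_le_iff₀ (log_pos one_lt_two)]
    nlinarith [log_two_gt_d9]
  refine Nat.le_floor ?_
  push_cast
  linarith

theorem le_exp_natCeil_log {t : ℝ} (ht : 0 < t) : t ≤ exp ⌈log t⌉₊ :=
  (log_le_iff_le_exp ht).1 (Nat.le_ceil _)

theorem exp_natCeil_log_le {t : ℝ} (ht : 1 ≤ t) : exp ⌈log t⌉₊ ≤ exp 1 * t := by
  rw [← exp_log (zero_lt_one.trans_le ht), ← exp_add, log_exp]
  exact exp_le_exp.2 ((Nat.ceil_lt_add_one (log_nonneg ht)).le.trans_eq (add_comm _ _))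

theorem summable_moment_bound (d : ℕ) {ψ : ℕ → ℝ} (hψpos : ∀ s, 0 < ψ s)
    (hψsum : Summable fun s : ℕ => (s + 1) / ψ s) :
    Summable fun s : ℕ => (2 * ⌊3 * exp s⌋₊ : ℝ) ^ d *
      ((3 + log ((exp s ^ (d + 1)) ^ 2)) / (exp s ^ d * ψ s) + 2 / √((exp s ^ (d + 1)) ^ 2)) := by
  have hexp : Summable fun s : ℕ => exp (-s) := summable_exp_neg_nat
  refine .of_nonneg_of_le (fun s => ?_) (fun s => ?_)
    (((hψsum.mul_left (2 * d + 3 : ℝ)).add (hexp.mul_left 2)).mul_left (6 ^ d : ℝ))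
  · have hlog : 0 ≤ log ((exp s ^ (d + 1)) ^ 2) :=
      log_nonneg (one_le_pow₀ (one_le_pow₀ (one_le_exp s.cast_nonneg)))
    have := hψpos s
    positivity
  · have hψ := hψpos s
    have hlog : 3 + log ((exp s ^ (d + 1)) ^ 2) ≤ (2 * d + 3) * (s + 1) := by
      rw [log_pow, log_pow, log_exp]
      push_cast
      linarith [s.cast_nonneg (α := ℝ), d.cast_nonneg (α := ℝ)]
    have hfloor : (2 * ⌊3 * exp s⌋₊ : ℝ) ≤ 6 * exp s := by
      linarith [Nat.floor_le (show 0 ≤ 3 * exp s by positivity)]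
    rw [sqrt_sq (by positivity)]
    calc _ ≤ (2 * ⌊3 * exp s⌋₊ : ℝ) ^ d *
            ((2 * d + 3) * (s + 1) / (exp s ^ d * ψ s) + 2 / exp s ^ (d + 1)) := by gcongr
      _ ≤ (6 * exp s) ^ d *
            ((2 * d + 3) * (s + 1) / (exp s ^ d * ψ s) + 2 / exp s ^ (d + 1)) := by gcongr
      _ = 6 ^ d * ((2 * d + 3) * ((s + 1) / ψ s) + 2 * exp (-s)) := by
          rw [exp_neg, mul_pow, pow_succ]
          field_simp

theorem summable_succ_div_pow {φ : ℕ → ℝ} (hpos : ∀ n, 0 < φ n) (hmono : Monotone φ)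
    (hsum : Summable fun n => 1 / φ n) {w : ℕ} (hw : 2 ≤ w) :
    Summable fun s : ℕ => (s + 1) / φ s ^ w := by
  have hsucc : ∀ s : ℕ, (s + 1) * (1 / φ s) ≤ ∑' n, 1 / φ n := fun s =>
    calc (s + 1) * (1 / φ s) = ∑ n ∈ range (s + 1), 1 / φ s := by simp
      _ ≤ ∑ n ∈ range (s + 1), 1 / φ n := sum_le_sum fun n hn =>
          one_div_le_one_div_of_le (hpos n) (hmono (mem_range_succ_iff.1 hn))
      _ ≤ ∑' n, 1 / φ n := hsum.sum_le_tsum _ fun n _ => (one_div_pos.2 (hpos n)).le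
  obtain ⟨k, rfl⟩ := Nat.exists_eq_add_of_le' hw
  refine .of_nonneg_of_le (fun s => ?_) (fun s => ?_)
    (hsum.mul_left ((∑' n, 1 / φ n) * (1 / φ 0) ^ k))
  · have := hpos s
    positivity
  · have h0 := hpos 0
    have hs := hpos s
    calc (s + 1) / φ s ^ (k + 2) = (s + 1) * (1 / φ s) * (1 / φ s) ^ k * (1 / φ s) := by
          rw [one_div_pow, pow_add]
          field_simp
      _ ≤ (∑' n, 1 / φ n) * (1 / φ 0) ^ k * (1 / φ s) := by
          gcongr
          exacts [tsum_nonneg fun n => (one_div_pos.2 (hpos n)).le, hsucc s, hmono (Nat.zero_le s)]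

end Scales

theorem abs_discLF_le_of_sum_momentSum_le {d N m : ℕ} {R lam M x : ℝ} (hN : N ≠ 0)
    (hm : Nat.log 2 N + 1 ≤ m) (hR : 1 ≤ R) (hlam : 0 < lam) (α : Fin d → ℝ)
    (hM : ∑ a ∈ pieceIndex (Fin d) m, momentSum R lam (pieceScale a) α ≤ M)
    (hx : x ∈ Set.Icc 0 1) :
    |DiscLF d N α x| ≤ 2 * 50 ^ d * ((2 * m) ^ d + (lam * M + M ^ 2)) := by
  have hnonneg : 0 ≤ ∑ a ∈ pieceIndex (Fin d) m, momentSum R lam (pieceScale a) α :=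
    sum_nonneg fun a _ => momentSum_nonneg (one_le_pieceScale a) hlam α
  calc |DiscLF d N α x|
    _ ≤ ∑ a ∈ pieceIndex (Fin d) (Nat.log 2 N + 1),
          2 * 50 ^ d * (1 + pieceSum (pieceScale a) α) := abs_discLF_le hN α hx
    _ ≤ ∑ a ∈ pieceIndex (Fin d) m, 2 * 50 ^ d * (1 + pieceSum (pieceScale a) α) :=
        sum_le_sum_of_subset_of_nonneg (pieceIndex_mono hm) fun a _ _ => by
          have := pieceSum_nonneg (one_le_pieceScale a) α
          positivity
    _ = 2 * 50 ^ d * ((2 * m) ^ d + ∑ a ∈ pieceIndex (Fin d) m, pieceSum (pieceScale a) α) := by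
        rw [← mul_sum, sum_add_distrib, sum_const, card_pieceIndex, Fintype.card_fin, nsmul_one]
        push_cast
        rfl
    _ ≤ 2 * 50 ^ d * ((2 * m) ^ d + (lam * M + M ^ 2)) := by
        gcongr
        refine (sum_pieceSum_le one_le_pieceScale hR hlam α).trans ?_
        gcongr

theorem ae_exists_forall_abs_discLF_le_exp (d : ℕ) {ψ : ℕ → ℝ} (hψpos : ∀ s, 0 < ψ s)
    (hψsum : Summable fun s : ℕ => (s + 1) / ψ s) :
    ∀ᵐ α ∂(volume : Measure (Fin d → ℝ)), ∃ C : ℝ, 0 ≤ C ∧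
      ∀ N s : ℕ, N ≠ 0 → Real.log N ≤ Real.exp s → ∀ x ∈ Set.Icc (0 : ℝ) 1,
        |DiscLF d N α x| ≤ C * Real.exp s ^ d * ψ s := by
  have hE : ∀ s : ℕ, 1 ≤ Real.exp s := fun s => Real.one_le_exp s.cast_nonneg
  have hlam : ∀ s : ℕ, 0 < Real.exp s ^ d * ψ s := fun s =>
    mul_pos (pow_pos (Real.exp_pos _) d) (hψpos s)
  have hR : ∀ s : ℕ, 1 ≤ (Real.exp s ^ (d + 1)) ^ 2 := fun s => one_le_pow₀ (one_le_pow₀ (hE s))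
  filter_upwards [ae_exists_forall_sum_momentSum_le (ι := Fin d) hR hlam
    (by simpa only [Fintype.card_fin] using summable_moment_bound d hψpos hψsum)] with α ⟨M, hM⟩
  have hM0 : 0 ≤ M :=
    (sum_nonneg fun a _ => momentSum_nonneg (one_le_pieceScale a) (hlam 0) α).trans (hM 0)
  set K := ∑' s : ℕ, (s + 1) / ψ s
  have hterm : ∀ s : ℕ, 0 ≤ (s + 1) / ψ s := fun s => div_nonneg (by positivity) (hψpos s).le
  have hK : ∀ s, 1 ≤ K * ψ s := fun s => by
    have := (div_le_iff₀ (hψpos s)).1 (hψsum.le_tsum s fun n _ => hterm n)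
    linarith [s.cast_nonneg (α := ℝ)]
  have hK0 : 0 ≤ K := tsum_nonneg hterm
  refine ⟨2 * 50 ^ d * ((6 ^ d + M ^ 2) * K + M), by positivity, fun N s hN hNs x hx => ?_⟩
  have hfloor : (2 * ⌊3 * Real.exp s⌋₊ : ℝ) ≤ 6 * Real.exp s := by
    linarith [Nat.floor_le (show 0 ≤ 3 * Real.exp s by positivity)]
  calc |DiscLF d N α x|
    _ ≤ 2 * 50 ^ d * ((2 * ⌊3 * Real.exp s⌋₊) ^ d + (Real.exp s ^ d * ψ s * M + M ^ 2)) :=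
        abs_discLF_le_of_sum_momentSum_le hN (natLog_two_add_one_le_floor (hE s) hNs) (hR s)
          (hlam s) α (hM s) hx
    _ ≤ 2 * 50 ^ d * ((6 * Real.exp s) ^ d +
          (Real.exp s ^ d * ψ s * M + Real.exp s ^ d * M ^ 2)) := by
        gcongr
        exact le_mul_of_one_le_left (sq_nonneg M) (one_le_pow₀ (hE s))
    _ = 2 * 50 ^ d * Real.exp s ^ d * ((6 ^ d + M ^ 2) * 1 + M * ψ s) := by ring
    _ ≤ 2 * 50 ^ d * Real.exp s ^ d * ((6 ^ d + M ^ 2) * (K * ψ s) + M * ψ s) := by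
        gcongr
        exact hK s
    _ = 2 * 50 ^ d * ((6 ^ d + M ^ 2) * K + M) * Real.exp s ^ d * ψ s := by ring

theorem stmt_0_general (d : ℕ) {ψ : ℕ → ℝ} (hψpos : ∀ s, 0 < ψ s)
    (hψsum : Summable fun s : ℕ => (s + 1) / ψ s) :
    ∀ᵐ α ∂(volume : Measure (Fin d → ℝ)),
      ∃ C : ℝ, ∀ N : ℕ, 3 ≤ N → ∀ x ∈ Set.Ioc (0 : ℝ) 1,
        |DiscLF d N α x| ≤ C * Real.log N ^ d * ψ ⌈Real.log (Real.log N)⌉₊ := by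
  filter_upwards [ae_exists_forall_abs_discLF_le_exp d hψpos hψsum] with α ⟨C, hC, hdisc⟩
  refine ⟨C * Real.exp 1 ^ d, fun N hN x hx => ?_⟩
  have hlog : 1 ≤ Real.log N := by
    have hN3 : (3 : ℝ) ≤ N := by exact_mod_cast hN
    rw [Real.le_log_iff_exp_le (by linarith)]
    linarith [Real.exp_one_lt_three]
  set s := ⌈Real.log (Real.log N)⌉₊
  have hψ := hψpos s
  calc |DiscLF d N α x| ≤ C * Real.exp s ^ d * ψ s :=
        hdisc N s (by lia) (le_exp_natCeil_log (by linarith)) x (Set.Ioc_subset_Icc_self hx)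
    _ ≤ C * (Real.exp 1 * Real.log N) ^ d * ψ s := by
        gcongr
        exact exp_natCeil_log_le hlog
    _ = C * Real.exp 1 ^ d * Real.log N ^ d * ψ s := by rw [mul_pow, ← mul_assoc]

/-- For a positive increasing `φ` with `∑ 1/φ(n) < ∞`, for a.e. `α ∈ ℝ^d` there is a
constant `C(α,φ)` with `Δ(α;N) ≤ C·(log N)^d·φ(log log N)^{max{3,d}}` for all `N ≥ 3`. -/
theorem stmt_0 (d : ℕ) (hd : 1 ≤ d) (φ : ℕ → ℝ) (hφpos : ∀ n, 0 < φ n)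
    (hφmono : Monotone φ) (hφsum : Summable fun n => 1 / φ n) :
    ∀ᵐ α ∂(volume : Measure (Fin d → ℝ)),
      ∃ C : ℝ, ∀ N : ℕ, 3 ≤ N → ∀ x ∈ Set.Ioc (0 : ℝ) 1,
        |DiscLF d N α x| ≤
          C * Real.log N ^ d * φ (Nat.ceil (Real.log (Real.log N))) ^ max 3 d :=
  stmt_0_general d (fun s => pow_pos (hφpos s) _)
    (summable_succ_div_pow hφpos hφmono hφsum (le_max_of_le_left (by norm_num)))
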